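/- arXiv:2305.00462 — 2 statements merged into one kernel-verified Lean document; each statement's English description precedes it below -/
import Mathlib

section
/- Let n ≥ 1, let γ : Fin n → ℝ satisfy γ i ≥ 0 for all i, let T = Σ_{i} γ i, and let x : Fin n → ℝ be non-increasing (i ≤ j implies x i ≥ x j). Then Σ_{j = 0}^{n−2} (Σ_{i ≤ j} γ i) · (T − Σ_{i ≤ j} γ i) · (x j − x (j+1)) = (1/2) · Σ_{u} Σ_{v} γ u · γ v · |x u − x v|, where the sums over u and v range over Fin n. -/
open Finset

/-!
Layer-cake decomposition over the cuts `{i ≤ j} ∪ {i > j}`: since `x` is non-increasing,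
`(x u - x v)⁺` is the sum of the drops `x j - x (j + 1)` at the cuts with `u ≤ j < v`. Exchanging
the sums, the drop at `j` is weighted by the total weight of the pairs that it separates in this
order, which is the product of the prefix sum of `γ` at `j` and its complement in `T`. The pairs
with `v` before `u` contribute the same amount, which accounts for the factor `1 / 2`.
-/

variable {R M ι ι' κ : Type*}

theorem sum_castSucc_sub_succ_of_le [AddCommGroup M] {n : ℕ} (x : Fin (n + 1) → M)
    {u v : Fin (n + 1)} (huv : u ≤ v) :
    ∑ j : Fin n with u ≤ j.castSucc ∧ j.castSucc < v, (x j.castSucc - x j.succ) = x u - x v := by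
  obtain rfl | hlt := huv.eq_or_lt
  · rw [sub_self, filter_false_of_mem fun j _ h ↦ h.1.not_gt h.2, sum_empty]
  · obtain ⟨a, rfl⟩ := Fin.exists_castSucc_eq.2 hlt.ne_top
    obtain ⟨b, rfl⟩ := Fin.exists_succ_eq.2 hlt.ne_bot
    have hIcc : ({j | a.castSucc ≤ j.castSucc ∧ j.castSucc < b.succ} : Finset (Fin n))
        = Icc a b := by
      ext j
      simp
    have hab : a ≤ b := Fin.castSucc_lt_succ_iff.1 hlt
    rw [hIcc, ← neg_inj, ← sum_neg_distrib]
    simpa only [neg_sub] using Fin.sum_Icc_sub hab x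

section Lattice

variable [AddCommGroup M] [Lattice M] [IsOrderedAddMonoid M]

theorem posPart_sub_eq_sum_of_antitone {n : ℕ} {x : Fin (n + 1) → M} (hx : Antitone x)
    (u v : Fin (n + 1)) :
    (x u - x v)⁺ = ∑ j : Fin n with u ≤ j.castSucc ∧ j.castSucc < v, (x j.castSucc - x j.succ) := by
  obtain huv | hvu := le_or_gt u v
  · rw [sum_castSucc_sub_succ_of_le x huv, posPart_eq_self, sub_nonneg]
    exact hx huv
  · have hempty (j : Fin n) : ¬(u ≤ j.castSucc ∧ j.castSucc < v) :=
      fun h ↦ (h.1.trans_lt h.2).not_gt hvu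
    simpa [hempty] using hx hvu.le

theorem sum_sum_smul_abs_sub_eq_two_nsmul_posPart [DistribSMul R M] [Fintype ι] {w : ι → ι → R}
    (hw : ∀ u v, w u v = w v u) (x : ι → M) :
    ∑ u, ∑ v, w u v • |x u - x v| = 2 • ∑ u, ∑ v, w u v • (x u - x v)⁺ := by
  have hswap : ∑ u, ∑ v, w u v • (x u - x v)⁻ = ∑ u, ∑ v, w u v • (x u - x v)⁺ := by
    rw [sum_comm]
    simp only [hw, ← posPart_neg, neg_sub]
  simp only [← posPart_add_negPart, smul_add, sum_add_distrib, hswap, two_nsmul]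

end Lattice

theorem sum_sum_mul_smul_sum_filter [Semiring R] [AddCommMonoid M] [Module R M] [Fintype ι]
    [Fintype ι'] [Fintype κ] (p : ι → κ → Prop) (q : ι' → κ → Prop) [∀ i, DecidablePred (p i)]
    [∀ i, DecidablePred (q i)] (a : ι → R) (b : ι' → R) (d : κ → M) :
    ∑ u, ∑ v, (a u * b v) • ∑ j with p u j ∧ q v j, d j
      = ∑ j, ((∑ u with p u j, a u) * ∑ v with q v j, b v) • d j := by
  simp only [sum_mul_sum, sum_smul, smul_sum]
  calc
    ∑ u, ∑ v, ∑ j with p u j ∧ q v j, (a u * b v) • d j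
        = ∑ u, ∑ j with p u j, ∑ v with q v j, (a u * b v) • d j :=
      sum_congr rfl fun u _ ↦ sum_comm' (by simp [and_comm])
    _ = ∑ j, ∑ u with p u j, ∑ v with q v j, (a u * b v) • d j := sum_comm' (by simp)

theorem prefix_telescoping_identity_general [CommRing R] [AddCommGroup M] [Lattice M]
    [IsOrderedAddMonoid M] [Module R M] {n : ℕ} (γ : Fin (n + 1) → R) {T : R} (hT : T = ∑ i, γ i)
    {x : Fin (n + 1) → M} (hx : Antitone x) :
    2 • ∑ j : Fin n, ((∑ i ∈ Iic j.castSucc, γ i) * (T - ∑ i ∈ Iic j.castSucc, γ i)) •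
          (x j.castSucc - x j.succ)
      = ∑ u, ∑ v, (γ u * γ v) • |x u - x v| := by
  have hsuffix (k : Fin (n + 1)) : T - ∑ i ∈ Iic k, γ i = ∑ i with k < i, γ i := by
    rw [hT, sub_eq_iff_eq_add', ← filter_ge_eq_Iic]
    simpa only [not_le] using (sum_filter_add_sum_filter_not univ (· ≤ k) γ).symm
  calc
    _ = 2 • ∑ j : Fin n, ((∑ u with u ≤ j.castSucc, γ u) * ∑ v with j.castSucc < v, γ v) •
          (x j.castSucc - x j.succ) := by
      simp only [hsuffix, filter_ge_eq_Iic]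
    _ = 2 • ∑ u, ∑ v, (γ u * γ v) • (x u - x v)⁺ := by
      simp only [posPart_sub_eq_sum_of_antitone hx, sum_sum_mul_smul_sum_filter]
    _ = ∑ u, ∑ v, (γ u * γ v) • |x u - x v| :=
      (sum_sum_smul_abs_sub_eq_two_nsmul_posPart (fun u v ↦ mul_comm (γ u) (γ v)) x).symm

/-- The telescoping identity at the core of Proposition 2: for `g y = y * (T - y)`,
the Lovász-extension sum of prefix cut values of a non-increasingly sorted vector
equals a weighted total-variation double sum.  Here the index type `Fin (n + 1)`
realizes an arbitrary `n' ≥ 1` (with `n' = n + 1`). -/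
theorem prefix_telescoping_identity (n : ℕ)
    (γ : Fin (n + 1) → ℝ) (hγ : ∀ i, 0 ≤ γ i)
    (T : ℝ) (hT : T = ∑ i, γ i)
    (x : Fin (n + 1) → ℝ) (hx : ∀ i j : Fin (n + 1), i ≤ j → x j ≤ x i) :
    ∑ j : Fin n,
        (∑ i ∈ Finset.Iic j.castSucc, γ i) * (T - ∑ i ∈ Finset.Iic j.castSucc, γ i)
          * (x j.castSucc - x j.succ)
      = (1 / 2) * ∑ u, ∑ v, γ u * γ v * |x u - x v| := by
  rw [one_div, eq_inv_mul_iff_mul_eq₀ two_ne_zero]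
  simpa using prefix_telescoping_identity_general γ hT (x := x) fun i j hij ↦ hx i j hij
end

section
/- Let V be a finite type, let e ⊆ V be a nonempty finite subset with n = |e|, let γ : V → ℝ satisfy γ v > 0 for v ∈ e and γ v = 0 for v ∉ e, let c > 0, and let T = Σ_{v ∈ e} γ v. Define w : Finset V → ℝ by w(S) = c · (Σ_{v ∈ S ∩ e} γ v) · (T − Σ_{v ∈ S ∩ e} γ v). Let x : V → ℝ and let ρ : Fin n → e be a bijective enumeration of e such that x(ρ 0) ≥ x(ρ 1) ≥ ⋯ ≥ x(ρ (n−1)). Then Σ_{j = 0}^{n−2} w({ρ 0, …, ρ j}) · (x(ρ j) − x(ρ (j+1))) = (c/2) · Σ_{u ∈ e} Σ_{v ∈ e} γ u · γ v · |x u − x v|. -/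
open Finset

/-! On subsets `S` of `e`, the function `S ↦ c * γ(S) * (γ(e) - γ(S))` is the cut function of the
complete digraph on `e` whose arc `(u, v)` has weight `c * (γ u * γ v)`. The Lovász extension is
linear in the set function, and on the cut function of a single arc `(u, v)` it telescopes to
`(x u - x v)⁺`: the level sets of `x` that separate `u` from `v` are those with threshold between
`x v` and `x u`. Summing over arcs and pairing `(u, v)` with `(v, u)` turns positive parts into
absolute values. -/

lemma posPart_sub_eq_sum_of_antitone_s6 {G : Type*} [AddCommGroup G] [LinearOrder G]
    [IsOrderedAddMonoid G] {m : ℕ} {f : Fin (m + 1) → G} (hf : Antitone f) (i j : Fin (m + 1)) :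
    (f i - f j)⁺ = ∑ k : Fin m with i ≤ k.castSucc ∧ k.castSucc < j,
      (f k.castSucc - f k.succ) := by
  rcases le_or_gt j i with hji | hij
  · rw [posPart_eq_zero.2 (sub_nonpos.2 (hf hji)), filter_false_of_mem, sum_empty]
    exact fun k _ hk => (hk.1.trans_lt hk.2).not_ge hji
  · obtain ⟨a, rfl⟩ := Fin.exists_castSucc_eq.2 (Fin.ne_last_of_lt hij)
    obtain ⟨b, rfl⟩ := Fin.exists_succ_eq.2 (Fin.ne_zero_of_lt hij)
    have hab : a ≤ b := Fin.castSucc_lt_succ_iff.1 hij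
    have hIcc : ({k | a.castSucc ≤ k.castSucc ∧ k.castSucc < b.succ} : Finset (Fin m))
        = Icc a b := by
      ext k
      simp only [mem_filter_univ, mem_Icc, Fin.castSucc_le_castSucc_iff, Fin.castSucc_lt_succ_iff]
    rw [posPart_eq_self.2 (sub_nonneg.2 (hf hij.le)), hIcc, ← neg_sub (f b.succ),
      ← Fin.sum_Icc_sub hab f, ← sum_neg_distrib]
    simp only [neg_sub]

lemma posPart_sub_eq_sum_image_Iic {V G : Type*} [DecidableEq V] [AddCommGroup G] [LinearOrder G]
    [IsOrderedAddMonoid G] {m : ℕ} {e : Finset V} {ρ : Fin (m + 1) ≃ {v // v ∈ e}} {x : V → G}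
    (hx : Antitone fun i => x (ρ i)) {u v : V} (hu : u ∈ e) (hv : v ∈ e) :
    (x u - x v)⁺ = ∑ k : Fin m with u ∈ (Iic k.castSucc).image (fun i => (ρ i : V)) ∧
      v ∉ (Iic k.castSucc).image (fun i => (ρ i : V)), (x (ρ k.castSucc) - x (ρ k.succ)) := by
  obtain ⟨i, hi⟩ := ρ.surjective ⟨u, hu⟩
  obtain ⟨j, hj⟩ := ρ.surjective ⟨v, hv⟩
  obtain rfl : (ρ i : V) = u := congrArg Subtype.val hi
  obtain rfl : (ρ j : V) = v := congrArg Subtype.val hj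
  have hinj : Function.Injective fun i => (ρ i : V) := Subtype.val_injective.comp ρ.injective
  have hmem (l k : Fin (m + 1)) : (ρ l : V) ∈ (Iic k).image (fun i => (ρ i : V)) ↔ l ≤ k := by
    rw [hinj.mem_finset_image (s := Iic k), mem_Iic]
  simp only [hmem, not_le]
  exact posPart_sub_eq_sum_of_antitone_s6 hx i j

section CutWeight

variable {V M : Type*} [DecidableEq V] [AddCommMonoid M]

/-- The directed cut function on `e`: the total weight `κ` of the arcs that leave `S` inside `e`. -/
def cutWeight (κ : V → V → M) (e S : Finset V) : M :=
  ∑ u ∈ S ∩ e, ∑ v ∈ e \ S, κ u v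

lemma cutWeight_self (κ : V → V → M) (e : Finset V) : cutWeight κ e e = 0 := by
  simp only [cutWeight, sdiff_self, bot_eq_empty, sum_empty, sum_const_zero]

lemma cutWeight_eq_sum_ite (κ : V → V → M) (e S : Finset V) :
    cutWeight κ e S = ∑ u ∈ e, ∑ v ∈ e, if u ∈ S ∧ v ∉ S then κ u v else 0 := by
  simp only [cutWeight, inter_comm S e, ← filter_mem_eq_inter, ← filter_notMem_eq_sdiff,
    sum_filter, ite_and, sum_ite_irrel, sum_const_zero]

lemma cutWeight_const_mul_mul {R : Type*} [CommRing R] (c : R) (γ : V → R) (e S : Finset V) :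
    cutWeight (fun u v => c * (γ u * γ v)) e S
      = c * (∑ v ∈ S ∩ e, γ v) * (∑ v ∈ e, γ v - ∑ v ∈ S ∩ e, γ v) := by
  have hcompl : ∑ v ∈ e, γ v - ∑ v ∈ S ∩ e, γ v = ∑ v ∈ e \ S, γ v := by
    rw [sub_eq_iff_eq_add, inter_comm, add_comm, sum_inter_add_sum_sdiff]
  rw [hcompl, mul_assoc, sum_mul_sum]
  simp only [cutWeight, mul_sum]

end CutWeight

section LovaszExtension

variable {V R : Type*} [DecidableEq V] [Ring R]

/-- The Lovász extension of the set function `F`, evaluated at `x` along the enumeration `ρ` of the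
ground set, which is meant to list the entries of `x` in non-increasing order. -/
def lovaszExtension (F : Finset V → R) (x : V → R) {m : ℕ} (ρ : Fin (m + 1) → V) : R :=
  ∑ k : Fin m, F ((Iic k.castSucc).image ρ) * (x (ρ k.castSucc) - x (ρ k.succ))
    + F (univ.image ρ) * x (ρ (Fin.last m))

lemma image_univ_coe_equiv {ι : Type*} [Fintype ι] {e : Finset V} (ρ : ι ≃ {v // v ∈ e}) :
    univ.image (fun i => (ρ i : V)) = e := by
  rw [← Function.comp_def, ← image_image, image_univ_equiv, univ_eq_attach, attach_image_val]

variable {m : ℕ} {e : Finset V} (ρ : Fin (m + 1) ≃ {v // v ∈ e})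

lemma lovaszExtension_cutWeight_eq_sum (κ : V → V → R) (x : V → R) :
    lovaszExtension (cutWeight κ e) x (fun i => (ρ i : V))
      = ∑ k : Fin m, cutWeight κ e ((Iic k.castSucc).image fun i => (ρ i : V))
          * (x (ρ k.castSucc) - x (ρ k.succ)) := by
  rw [lovaszExtension, image_univ_coe_equiv, cutWeight_self, zero_mul, add_zero]

variable [LinearOrder R] [IsOrderedAddMonoid R] {x : V → R} {ρ}

theorem lovaszExtension_cutWeight (κ : V → V → R) (hx : Antitone fun i => x (ρ i)) :
    lovaszExtension (cutWeight κ e) x (fun i => (ρ i : V))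
      = ∑ u ∈ e, ∑ v ∈ e, κ u v * (x u - x v)⁺ := by
  simp only [lovaszExtension_cutWeight_eq_sum, cutWeight_eq_sum_ite, sum_mul]
  rw [sum_comm]
  refine sum_congr rfl fun u hu => ?_
  rw [sum_comm]
  refine sum_congr rfl fun v hv => ?_
  rw [posPart_sub_eq_sum_image_Iic hx hu hv, mul_sum, sum_filter]
  simp only [ite_mul, zero_mul]

theorem two_mul_lovaszExtension_cutWeight {κ : V → V → R} (hκ : ∀ u v, κ u v = κ v u)
    (hx : Antitone fun i => x (ρ i)) :
    2 * lovaszExtension (cutWeight κ e) x (fun i => (ρ i : V))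
      = ∑ u ∈ e, ∑ v ∈ e, κ u v * |x u - x v| := by
  have hswap : ∑ u ∈ e, ∑ v ∈ e, κ u v * (x u - x v)⁺
      = ∑ u ∈ e, ∑ v ∈ e, κ u v * (x u - x v)⁻ := by
    rw [sum_comm]
    refine sum_congr rfl fun u _ => sum_congr rfl fun v _ => ?_
    rw [hκ, ← posPart_neg, neg_sub]
  simp only [← posPart_add_negPart, mul_add, sum_add_distrib]
  rw [← hswap, ← lovaszExtension_cutWeight κ hx, two_mul]

end LovaszExtension

theorem lovasz_extension_clique_general {V K : Type*} [DecidableEq V] [Field K] [LinearOrder K]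
    [IsStrictOrderedRing K] {m : ℕ} {e : Finset V} (γ : V → K) (c : K) {T : K}
    (hT : T = ∑ v ∈ e, γ v) (w : Finset V → K)
    (hw : ∀ S, w S = c * (∑ v ∈ S ∩ e, γ v) * (T - ∑ v ∈ S ∩ e, γ v))
    (x : V → K) {ρ : Fin (m + 1) → {v // v ∈ e}} (hρ : Function.Bijective ρ)
    (hx : Antitone fun i => x (ρ i)) :
    ∑ j : Fin m, w ((Iic j.castSucc).image fun i => (ρ i : V))
        * (x (ρ j.castSucc) - x (ρ j.succ))
      = c / 2 * ∑ u ∈ e, ∑ v ∈ e, γ u * γ v * |x u - x v| := by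
  obtain rfl : w = cutWeight (fun u v => c * (γ u * γ v)) e := by
    ext S
    rw [hw, hT, cutWeight_const_mul_mul]
  have hsymm (u v : V) : c * (γ u * γ v) = c * (γ v * γ u) := by rw [mul_comm (γ u)]
  have htwo := two_mul_lovaszExtension_cutWeight (ρ := .ofBijective ρ hρ) hsymm hx
  rw [lovaszExtension_cutWeight_eq_sum] at htwo
  simp only [Equiv.ofBijective_apply, mul_assoc c, ← mul_sum] at htwo
  rw [div_mul_eq_mul_div, eq_div_iff two_ne_zero, mul_comm, htwo]

/-- The per-hyperedge identity in the proof of Proposition 2: for the weight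
function `w S = c * g (∑ v ∈ S ∩ e, γ v)` with `g y = y * (T - y)`, the Lovász
extension of `w` at `x`, computed via a sorted enumeration `ρ` of `e`, equals
`(c / 2) * ∑ u ∈ e, ∑ v ∈ e, γ u * γ v * |x u - x v|`. -/
theorem lovasz_extension_clique (V : Type*) [Fintype V] [DecidableEq V]
    (e : Finset V) (he : e.Nonempty) (n : ℕ) (hn : n = e.card)
    (γ : V → ℝ) (hγpos : ∀ v ∈ e, 0 < γ v) (hγ0 : ∀ v ∉ e, γ v = 0)
    (c : ℝ) (hc : 0 < c) (T : ℝ) (hT : T = ∑ v ∈ e, γ v)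
    (w : Finset V → ℝ)
    (hw : ∀ S : Finset V, w S = c * (∑ v ∈ S ∩ e, γ v) * (T - ∑ v ∈ S ∩ e, γ v))
    (x : V → ℝ) (ρ : Fin n → {v // v ∈ e}) (hρ : Function.Bijective ρ)
    (hsort : ∀ i j : Fin n, i ≤ j → x (ρ j) ≤ x (ρ i)) :
    ∑ j : Fin (n - 1),
        w ((Finset.Iic (⟨j.val, lt_of_lt_of_le j.isLt (Nat.sub_le n 1)⟩ : Fin n)).image
              (fun i => (ρ i : V)))
          * (x (ρ ⟨j.val, lt_of_lt_of_le j.isLt (Nat.sub_le n 1)⟩)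
              - x (ρ ⟨j.val + 1, by have := j.isLt; omega⟩))
      = (c / 2) * ∑ u ∈ e, ∑ v ∈ e, γ u * γ v * |x u - x v| := by
  obtain ⟨m, rfl⟩ := Nat.exists_eq_succ_of_ne_zero (hn.trans_ne he.card_ne_zero)
  exact lovasz_extension_clique_general γ c hT w hw x hρ hsort
end
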